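/- For every κ > 0 and every t > 0, one has the exact identity μ^{ℓ,r}_t([κt, ∞)) = ( (κ^{−γ}/γ)·E[R^γ·1{R ≥ κ}] + ((2−γ)·κ^{1−γ}/((γ−1)γ))·E[R^{γ−1}·1{R ≥ κ}] ) · t^{−(γ−1)}. -/

import Mathlib

open MeasureTheory Filter Set
open scoped ENNReal NNReal Topology

noncomputable section

/-- `ℓ_t(s,u)`: the length of the interval `[s,s+u] ∩ [0,t]`. -/
def ellK (t s u : ℝ) : ℝ := max 0 (min (s + u) t - max s 0)

/-- The intensity measure `u^{-γ-1} du` on `(0,∞)`. -/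
def muU (γ : ℝ) : Measure ℝ :=
  (volume.restrict (Set.Ioi 0)).withDensity fun u => ENNReal.ofReal (u ^ (-γ - 1))

/-- The measure `μ^ℓ_t` on `(0,∞)`:
`μ^ℓ_t(A) = ∫_ℝ ∫_0^∞ 1{ℓ_t(s,u) ∈ A} u^{-γ-1} du ds`. -/
def muEll (γ t : ℝ) : Measure ℝ :=
  (Measure.map (fun p : ℝ × ℝ => ellK t p.1 p.2)
    ((volume : Measure ℝ).prod (muU γ))).restrict (Set.Ioi 0)

/-- The measure `μ^{ℓ,r}_t` on `(0,∞)`: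
`μ^{ℓ,r}_t(A) = ∫_{(0,∞)} ∫_{(0,∞)} 1{rℓ ∈ A} μ^ℓ_t(dℓ) F_R(dr)`. -/
def muEllR (γ t : ℝ) (FR : Measure ℝ) : Measure ℝ :=
  (Measure.map (fun p : ℝ × ℝ => p.1 * p.2) (FR.prod (muEll γ t))).restrict (Set.Ioi 0)

/-- The measure `ν` on `[0,1]`: density `s^{-(γ+1)} + ((2-γ)/γ)·s^{-γ}` on `(0,1)` with
respect to Lebesgue measure, together with an atom of mass `1/(γ(γ-1))` at the point `1`. -/
def nuM (γ : ℝ) : Measure ℝ :=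
  (volume.restrict (Set.Ioo 0 1)).withDensity
      (fun s => ENNReal.ofReal (s ^ (-(γ + 1)) + (2 - γ) / γ * s ^ (-γ)))
    + (Real.toNNReal (1 / (γ * (γ - 1)))) • Measure.dirac 1

instance nuM.sigmaFinite (γ : ℝ) : SigmaFinite (nuM γ) := by
  unfold nuM; infer_instance

end

/-!
An interval `[s, s + u]` overlaps `[0, t]` in length at least `a` exactly when `a ≤ u`, `a ≤ t`
and `s ∈ [a - u, t - a]`, a window of length `(t - a) + (u - a)`. Integrating this length against
`u ^ (-γ - 1) du` over `u ≥ a` gives the tail of `μ^ℓ_t` at `a ≤ t`. Conditionally on `R = r`, the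
event `rℓ ≥ κt` is `ℓ ≥ κt / r`, which is possible only if `r ≥ κ`; by homogeneity the tail of
`μ^ℓ_t` at `κt / r` is `t ^ (1 - γ)` times a combination of `r ^ γ` and `r ^ (γ - 1)`.
-/

section RpowIntegrals

variable {γ a κ p q : ℝ}

theorem integrableOn_Ici_rpow_of_le {μ : Measure ℝ} (hκ : 0 < κ) (hpq : p ≤ q)
    (hq : IntegrableOn (fun r => r ^ q) (Ici κ) μ) : IntegrableOn (fun r => r ^ p) (Ici κ) μ := by
  refine (hq.const_mul (κ ^ (p - q))).mono' (by fun_prop) ?_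
  filter_upwards [ae_restrict_mem measurableSet_Ici] with r hr
  have hr0 : 0 < r := hκ.trans_le hr
  calc ‖r ^ p‖ = r ^ (p - q) * r ^ q := by
        rw [Real.norm_of_nonneg (by positivity), ← Real.rpow_add hr0, sub_add_cancel]
    _ ≤ κ ^ (p - q) * r ^ q := by
        gcongr ?_ * r ^ q
        exact Real.rpow_le_rpow_of_nonpos hκ hr (sub_nonpos.2 hpq)

theorem setLIntegral_Ioi_rpow_mul_add_sub (hγ : 1 < γ) (ha : 0 < a) {c : ℝ} (hc : 0 ≤ c) :
    ∫⁻ u in Ioi a, ENNReal.ofReal (u ^ (-γ - 1) * (c + (u - a))) =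
      ENNReal.ofReal (c * a ^ (-γ) / γ + a ^ (1 - γ) / (γ * (γ - 1))) := by
  have hexpand : EqOn (fun u => u ^ (-γ - 1) * (c + (u - a)))
      (fun u => (c - a) * u ^ (-γ - 1) + u ^ (-γ)) (Ioi a) := fun u hu => by
    have hpow : u ^ (-γ) = u ^ (-γ - 1) * u := by
      rw [← Real.rpow_add_one (ha.trans hu).ne', sub_add_cancel]
    simp only [hpow]
    ring
  have hint₁ : IntegrableOn (fun u : ℝ => (c - a) * u ^ (-γ - 1)) (Ioi a) :=
    (integrableOn_Ioi_rpow_of_lt (by linarith) ha).const_mul _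
  have hint₂ : IntegrableOn (fun u : ℝ => u ^ (-γ)) (Ioi a) :=
    integrableOn_Ioi_rpow_of_lt (by linarith) ha
  have hnonneg : ∀ᵐ u ∂volume.restrict (Ioi a), 0 ≤ u ^ (-γ - 1) * (c + (u - a)) := by
    filter_upwards [ae_restrict_mem measurableSet_Ioi] with u hu
    have hu0 : 0 < u := ha.trans hu
    have hua : 0 < u - a := sub_pos.2 hu
    positivity
  rw [← ofReal_integral_eq_lintegral_ofReal
      ((hint₁.add hint₂).congr_fun hexpand.symm measurableSet_Ioi) hnonneg,
    setIntegral_congr_fun measurableSet_Ioi hexpand, integral_add hint₁ hint₂,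
    integral_const_mul, integral_Ioi_rpow_of_lt (by linarith) ha,
    integral_Ioi_rpow_of_lt (by linarith) ha]
  have hγ0 : γ ≠ 0 := by linarith
  have hγ1 : γ - 1 ≠ 0 := by linarith
  rw [sub_add_cancel, show -γ + 1 = -(γ - 1) by ring, show 1 - γ = -(γ - 1) by ring,
    show a ^ (-(γ - 1)) = a ^ (-γ) * a by rw [← Real.rpow_add_one ha.ne']; ring_nf]
  congr 1
  field_simp
  ring

end RpowIntegrals

section Overlap

variable {t a s u : ℝ}

theorem measurable_ellK (t : ℝ) : Measurable fun p : ℝ × ℝ => ellK t p.1 p.2 := by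
  unfold ellK
  fun_prop

theorem le_ellK_iff (ha : 0 < a) :
    a ≤ ellK t s u ↔ a ≤ u ∧ a ≤ t ∧ s ∈ Icc (a - u) (t - a) := by
  rw [ellK, le_max_iff, or_iff_right ha.not_ge, le_sub_comm, max_le_iff, le_sub_iff_add_le,
    le_sub_iff_add_le, le_min_iff, le_min_iff, zero_add, mem_Icc]
  constructor
  · rintro ⟨⟨h₁, h₂⟩, h₃, h₄⟩
    refine ⟨?_, ?_, ?_, ?_⟩ <;> linarith
  · rintro ⟨h₁, h₂, h₃, h₄⟩
    refine ⟨⟨?_, ?_⟩, ?_, ?_⟩ <;> linarith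

theorem volume_setOf_le_ellK (ha : 0 < a) (hat : a ≤ t) (u : ℝ) :
    volume {s | a ≤ ellK t s u} =
      (Ici a).indicator (fun u => ENNReal.ofReal (t - a + (u - a))) u := by
  by_cases hu : a ≤ u
  · simp only [le_ellK_iff ha, hu, hat, true_and, ofPred_mem_eq, Real.volume_Icc,
      indicator_of_mem (mem_Ici.2 hu)]
    ring_nf
  · simp [le_ellK_iff ha, hu]

end Overlap

section MuEll

variable {γ t a : ℝ}

instance muU.sFinite (γ : ℝ) : SFinite (muU γ) := by
  unfold muU; infer_instance

instance muEll.sFinite (γ t : ℝ) : SFinite (muEll γ t) := by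
  unfold muEll; infer_instance

theorem setLIntegral_Ici_muU (ha : 0 < a) {f : ℝ → ℝ≥0∞} (hf : Measurable f) :
    ∫⁻ u in Ici a, f u ∂muU γ = ∫⁻ u in Ioi a, ENNReal.ofReal (u ^ (-γ - 1)) * f u := by
  rw [muU, restrict_withDensity measurableSet_Ici, Measure.restrict_restrict measurableSet_Ici,
    inter_eq_left.2 (Ici_subset_Ioi.2 ha),
    lintegral_withDensity_eq_lintegral_mul _ (by fun_prop) hf,
    setLIntegral_congr Ioi_ae_eq_Ici.symm]
  rfl

theorem muEll_Iic_zero (γ t : ℝ) : muEll γ t (Iic 0) = 0 := by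
  rw [muEll, Measure.restrict_apply measurableSet_Iic, Iic_inter_Ioi, Ioc_self, measure_empty]

theorem muEll_Ici_eq_lintegral (γ t : ℝ) (ha : 0 < a) :
    muEll γ t (Ici a) = ∫⁻ u, volume {s | a ≤ ellK t s u} ∂muU γ := by
  rw [muEll, Measure.restrict_apply measurableSet_Ici, inter_eq_left.2 (Ici_subset_Ioi.2 ha),
    Measure.map_apply (measurable_ellK t) measurableSet_Ici,
    Measure.prod_apply_symm (measurable_ellK t measurableSet_Ici)]
  rfl

theorem muEll_Ici_of_lt (γ : ℝ) (ha : 0 < a) (hta : t < a) : muEll γ t (Ici a) = 0 := by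
  simp [muEll_Ici_eq_lintegral γ t ha, le_ellK_iff ha, hta.not_ge]

/-- The tail `a ↦ μ^ℓ_t([a, ∞))` for `0 < a ≤ t`, as a real number. It is written as a sum of two
terms that are nonnegative on this range for every `γ > 1`. -/
noncomputable def muEllTail (γ t a : ℝ) : ℝ :=
  (t - a) * a ^ (-γ) / γ + a ^ (1 - γ) / (γ * (γ - 1))

theorem muEllTail_nonneg (hγ : 1 < γ) (ha : 0 ≤ a) (hat : a ≤ t) : 0 ≤ muEllTail γ t a := by
  have : 0 < γ - 1 := sub_pos.2 hγ
  have : 0 ≤ t - a := sub_nonneg.2 hat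
  unfold muEllTail
  positivity

theorem muEll_Ici_of_le (hγ : 1 < γ) (ha : 0 < a) (hat : a ≤ t) :
    muEll γ t (Ici a) = ENNReal.ofReal (muEllTail γ t a) :=
  calc muEll γ t (Ici a)
      = ∫⁻ u in Ici a, ENNReal.ofReal (t - a + (u - a)) ∂muU γ := by
        simp only [muEll_Ici_eq_lintegral γ t ha, volume_setOf_le_ellK ha hat,
          lintegral_indicator measurableSet_Ici]
    _ = ∫⁻ u in Ioi a, ENNReal.ofReal (u ^ (-γ - 1)) * ENNReal.ofReal (t - a + (u - a)) :=
        setLIntegral_Ici_muU ha (by fun_prop)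
    _ = ∫⁻ u in Ioi a, ENNReal.ofReal (u ^ (-γ - 1) * (t - a + (u - a))) :=
        setLIntegral_congr_fun measurableSet_Ioi fun u hu =>
          (ENNReal.ofReal_mul (Real.rpow_nonneg (ha.trans hu).le _)).symm
    _ = ENNReal.ofReal (muEllTail γ t a) :=
        setLIntegral_Ioi_rpow_mul_add_sub hγ ha (sub_nonneg.2 hat)

theorem muEllTail_mul_div {κ r : ℝ} (hγ : 1 < γ) (hκ : 0 < κ) (ht : 0 < t) (hr : 0 < r) :
    muEllTail γ t (κ * t / r) =
      (κ ^ (-γ) / γ * r ^ γ + (2 - γ) * κ ^ (1 - γ) / ((γ - 1) * γ) * r ^ (γ - 1))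
        * t ^ (-(γ - 1)) := by
  have hscale (p : ℝ) : (κ * t / r) ^ p = κ ^ p * t ^ p * r ^ (-p) := by
    rw [Real.div_rpow (by positivity) hr.le, Real.mul_rpow hκ.le ht.le, Real.rpow_neg hr.le,
      div_eq_mul_inv]
  have hpow {x : ℝ} (hx : 0 < x) : x ^ (1 - γ) = x * x ^ (-γ) := by
    rw [sub_eq_add_neg, Real.rpow_add hx, Real.rpow_one]
  have hγ0 : γ ≠ 0 := by linarith
  have hγ1 : γ - 1 ≠ 0 := by linarith
  rw [muEllTail, hscale, hscale, neg_neg, neg_sub, neg_sub, hpow hκ, hpow ht,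
    Real.rpow_sub_one hr.ne']
  field_simp
  ring

end MuEll

section MuEllR

variable {γ t b κ : ℝ} {FR : Measure ℝ}

theorem muEllR_Ici_eq_setLIntegral (γ t : ℝ) (FR : Measure ℝ) (hb : 0 < b) :
    muEllR γ t FR (Ici b) = ∫⁻ r in Ioi 0, muEll γ t (Ici (b / r)) ∂FR := by
  have hmul : Measurable fun p : ℝ × ℝ => p.1 * p.2 := by fun_prop
  rw [muEllR, Measure.restrict_apply measurableSet_Ici, inter_eq_left.2 (Ici_subset_Ioi.2 hb),
    Measure.map_apply hmul measurableSet_Ici, Measure.prod_apply (hmul measurableSet_Ici),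
    ← lintegral_indicator measurableSet_Ioi]
  refine lintegral_congr fun r => ?_
  change muEll γ t {ℓ | b ≤ r * ℓ} = _
  by_cases hr : 0 < r
  · simp only [indicator_of_mem (mem_Ioi.2 hr), ← div_le_iff₀' hr]
    rfl
  · rw [indicator_of_notMem (notMem_Ioi.2 (not_lt.1 hr))]
    refine measure_mono_null (fun ℓ hℓ => ?_) (muEll_Iic_zero γ t)
    exact (neg_of_mul_pos_right (hb.trans_le hℓ) (not_lt.1 hr)).le

theorem muEllR_Ici (hγ : 1 < γ) (ht : 0 < t) (FR : Measure ℝ) (hb : 0 < b) :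
    muEllR γ t FR (Ici b) =
      ∫⁻ r in Ici (b / t), ENNReal.ofReal (muEllTail γ t (b / r)) ∂FR := by
  have htail : EqOn (fun r => muEll γ t (Ici (b / r)))
      ((Ici (b / t)).indicator fun r => ENNReal.ofReal (muEllTail γ t (b / r))) (Ioi 0) := by
    intro r (hr : 0 < r)
    have hle : b / r ≤ t ↔ r ∈ Ici (b / t) := div_le_comm₀ hr ht
    by_cases hrb : r ∈ Ici (b / t)
    · simp only [indicator_of_mem hrb, muEll_Ici_of_le hγ (div_pos hb hr) (hle.2 hrb)]
    · simp only [indicator_of_notMem hrb,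
        muEll_Ici_of_lt γ (div_pos hb hr) (not_le.1 (mt hle.1 hrb))]
  rw [muEllR_Ici_eq_setLIntegral γ t FR hb, setLIntegral_congr_fun measurableSet_Ioi htail,
    lintegral_indicator measurableSet_Ici, Measure.restrict_restrict measurableSet_Ici,
    inter_eq_left.2 (Ici_subset_Ioi.2 (div_pos hb ht))]

theorem stmt_11_general (hγ : 1 < γ)
    (hmom : IntegrableOn (fun r => r ^ γ) (Ici κ) FR) (hκ : 0 < κ) (ht : 0 < t) :
    muEllR γ t FR (Ici (κ * t)) =
      ENNReal.ofReal
        ((κ ^ (-γ) / γ * (∫ r in Ici κ, r ^ γ ∂FR)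
          + (2 - γ) * κ ^ (1 - γ) / ((γ - 1) * γ) * (∫ r in Ici κ, r ^ (γ - 1) ∂FR))
        * t ^ (-(γ - 1))) := by
  have htail : EqOn (fun r => muEllTail γ t (κ * t / r)) _ (Ici κ) := fun r hr =>
    muEllTail_mul_div hγ hκ ht (hκ.trans_le hr)
  have hint₁ := hmom.const_mul (κ ^ (-γ) / γ)
  have hint₂ := (integrableOn_Ici_rpow_of_le hκ (sub_le_self γ zero_le_one) hmom).const_mul
    ((2 - γ) * κ ^ (1 - γ) / ((γ - 1) * γ))
  have hint : IntegrableOn (fun r => muEllTail γ t (κ * t / r)) (Ici κ) FR :=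
    IntegrableOn.congr_fun ((hint₁.add hint₂).mul_const _) htail.symm measurableSet_Ici
  have hnonneg : ∀ᵐ r ∂FR.restrict (Ici κ), 0 ≤ muEllTail γ t (κ * t / r) := by
    filter_upwards [ae_restrict_mem measurableSet_Ici] with r (hr : κ ≤ r)
    have hr0 : 0 < r := hκ.trans_le hr
    refine muEllTail_nonneg hγ (by positivity) ?_
    rw [div_le_iff₀ hr0, mul_comm]
    gcongr
  rw [muEllR_Ici hγ ht FR (mul_pos hκ ht), mul_div_cancel_right₀ κ ht.ne',
    ← ofReal_integral_eq_lintegral_ofReal hint hnonneg,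
    setIntegral_congr_fun measurableSet_Ici htail, integral_mul_const,
    integral_add hint₁ hint₂, integral_const_mul, integral_const_mul]

end MuEllR

/-- Exact identity: for `κ > 0`, `t > 0`,
`μ^{ℓ,r}_t([κt,∞)) = ((κ^{-γ}/γ)·E[R^γ 1{R ≥ κ}] + ((2-γ)κ^{1-γ}/((γ-1)γ))·E[R^{γ-1} 1{R ≥ κ}])·t^{-(γ-1)}`. -/
theorem stmt_11 (γ : ℝ) (hγ1 : 1 < γ) (hγ2 : γ < 2)
    (FR : Measure ℝ) [IsProbabilityMeasure FR] (hFRpos : FR (Set.Iic 0) = 0)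
    (hmom : Integrable (fun r => r ^ γ) FR)
    (κ : ℝ) (hκ : 0 < κ) (t : ℝ) (ht : 0 < t) :
    muEllR γ t FR (Set.Ici (κ * t))
      = ENNReal.ofReal
          ((κ ^ (-γ) / γ * (∫ r in Set.Ici κ, r ^ γ ∂FR)
            + (2 - γ) * κ ^ (1 - γ) / ((γ - 1) * γ) * (∫ r in Set.Ici κ, r ^ (γ - 1) ∂FR))
          * t ^ (-(γ - 1))) :=
  stmt_11_general hγ1 hmom.integrableOn hκ ht
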